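/- For n ≥ 3, let m be the unique integer for which fib(m−1) < n−2 ≤ fib(m). If w is a shortest carefully synchronizing word for the PFA P_n, then |w| = n² + mn − 5n − fib(m+1) − 2m + 8. Furthermore, |w| > (n−1)² for all n ≥ 6. -/

import Mathlib

/-- One step of a PFA on an `Option` state. -/
def pfaStep {Q σ : Type*} (δ : Q → σ → Option Q) (o : Option Q) (a : σ) : Option Q :=
  o.bind fun q => δ q a

/-- The (partial) state reached from `q` after reading word `w` in the PFA `δ`. -/
def pfaRun {Q σ : Type*} (δ : Q → σ → Option Q) (q : Q) (w : List σ) : Option Q :=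
  w.foldl (pfaStep δ) (some q)

/-- A word `w` is carefully synchronizing for the PFA `δ`. -/
def IsCareSyncWord {Q σ : Type*} (δ : Q → σ → Option Q) (w : List σ) : Prop :=
  ∃ qs : Q, ∀ q : Q, pfaRun δ q w = some qs

/-- The PFA `P_n`: states `Fin n` (state `i` represents the paper's state `i+1`),
alphabet `Bool` with `false = a`, `true = b`.  Here `1a` is undefined, `qa = q+1` for
`2 ≤ q ≤ n−1`, `na = 1`; `qb = q+1` for `q = 1,2` and `qb = q` for `3 ≤ q ≤ n`. -/
def Pdelta (n : ℕ) (hn : 3 ≤ n) : Fin n → Bool → Option (Fin n) := fun q x =>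
  match x with
  | false =>
    if q.val = 0 then none
    else if hq : q.val + 1 < n then some ⟨q.val + 1, hq⟩
    else some ⟨0, by omega⟩
  | true =>
    if hq : q.val ≤ 1 then some ⟨q.val + 1, by omega⟩ else some q

/-!
Lift the states along `ℕ → ℤ/nℤ`: both letters move a position by at most one step, monotonically
and commuting with full turns, so tokens placed on the states keep their cyclic order. A
synchronizing word merges all tokens of one turn, which forces its first token to be pushed from
`2` to `3` by `b` sufficiently often; as it needs a full turn between two pushes, this bounds the
number of letters `a`.

The number of letters `b` is at least the number of times at which some token of the turn is moved
by `b`. Before two tokens merge, no `b` moves both of them, and the difference of their pushes is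
determined by their distance. Consider a window of tokens that merge with each other: just before
its end tokens meet there is a gap somewhere in it, and until then no `b` moves tokens on both
sides of the gap. This splits the window into two, and the resulting recursion for the number of
letters `b` is solved by a piecewise linear function with slopes changing at the Fibonacci numbers.

Conversely, the recursion can be executed: in each lap of length about `n` a token waiting in the
cell `y` (state `y + 3`) is moved into the next cell by `b²` or kept by `b` when it passes the
state `1`, and both parts of an optimally split window are processed in parallel. The word obtained
in this way attains the lower bound.
-/

theorem card_sdiff_eq_card_sdiff_union_add {α : Type*} [DecidableEq α] {A B W : Finset α}
    (h : B ⊆ W) :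
    (W \ A).card = (W \ (A ∪ B)).card + (B \ A).card := by
  rw [← Finset.card_sdiff_add_card_inter (W \ A) B, sdiff_sdiff_left,
    Finset.sdiff_inter_right_comm, Finset.inter_eq_right.2 h]
  rfl

theorem exists_apply_succ_eq_apply_add {N n : ℕ} (hN : 0 < N) (hn : 0 < n) {f : ℕ → ℕ}
    (hf : Monotone f) (hadd : ∀ q, f (q + N) = f q + n) (hmod : ∀ q r, f q ≡ f r [MOD n]) :
    ∃ i, f (i + 1) = f (i + N) := by
  obtain ⟨i, hi⟩ : ∃ i, f i < f (i + 1) := by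
    by_contra! h
    have := antitone_nat_of_succ_le h N.zero_le
    have := hadd 0
    rw [zero_add] at this
    omega
  exact ⟨i, (hf (by omega)).antisymm (hadd i ▸ (hmod i (i + 1)).add_le_of_lt hi)⟩

theorem five_le_of_four_le_fib {m : ℕ} (h : 4 ≤ Nat.fib m) : 5 ≤ m :=
  Nat.fib_mono.reflect_lt (show Nat.fib 4 < Nat.fib m from h)

theorem fib_succ_le_mul {m K : ℕ} (hm : 5 ≤ m) (hK : Nat.fib (m - 1) < K) :
    Nat.fib (m + 1) ≤ (m - 3) * K := by
  rcases hm.eq_or_lt with rfl | hm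
  · exact Nat.mul_le_mul_left 2 (show 4 ≤ K from hK)
  · obtain ⟨m, rfl⟩ := Nat.exists_eq_add_of_le' hm
    calc Nat.fib (m + 7) ≤ 3 * Nat.fib (m + 5) := by
          have h₆ : Nat.fib (m + 6) = Nat.fib (m + 4) + Nat.fib (m + 5) := Nat.fib_add_two
          have h₇ : Nat.fib (m + 7) = Nat.fib (m + 5) + Nat.fib (m + 6) := Nat.fib_add_two
          have := Nat.fib_mono (show m + 4 ≤ m + 5 by omega)
          omega
      _ ≤ (m + 3) * K := Nat.mul_le_mul (by omega) hK.le

theorem map_range_getD {α : Type*} (w : List α) (d : α) :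
    (List.range w.length).map (w.getD · d) = w :=
  List.ext_getElem (by simp) fun k _ hk => by simp [hk]

theorem succ_ceilDiv {n : ℕ} (hn : 0 < n) (p : ℕ) :
    (p + 1) ⌈/⌉ n = p ⌈/⌉ n + if p % n = 0 then 1 else 0 := by
  rw [Nat.ceilDiv_eq_add_pred_div, Nat.ceilDiv_eq_add_pred_div,
    show p + 1 + n - 1 = p + n - 1 + 1 by omega, Nat.succ_div,
    show p + n - 1 + 1 = p + n by omega]
  simp only [Nat.dvd_iff_mod_eq_zero, Nat.add_mod_right]

theorem mul_ceilDiv_lt {n : ℕ} (hn : 0 < n) (p : ℕ) : n * (p ⌈/⌉ n) < p + n := by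
  have := Nat.mul_div_le (p + n - 1) n
  rw [Nat.ceilDiv_eq_add_pred_div]
  omega

theorem succ_mod_eq_one_iff {n : ℕ} (hn : 1 < n) (p : ℕ) : (p + 1) % n = 1 ↔ p % n = 0 := by
  have hp := Nat.mod_lt p (show 0 < n by omega)
  rw [Nat.add_mod_eq_ite, Nat.mod_eq_of_lt hn]
  split_ifs <;> omega

theorem pfaRun_cons {Q σ : Type*} (δ : Q → σ → Option Q) (q : Q) (c : σ) (w : List σ) :
    pfaRun δ q (c :: w) = (δ q c).bind fun s => pfaRun δ s w := by
  have foldl_none (w : List σ) : w.foldl (pfaStep δ) none = none := by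
    induction w with
    | nil => rfl
    | cons _ _ ih => exact ih
  rw [pfaRun, List.foldl_cons, pfaStep, Option.bind_some]
  cases δ q c with
  | none => exact foldl_none w
  | some s => rfl

theorem pfaRun_singleton {Q σ : Type*} (δ : Q → σ → Option Q) (q : Q) (c : σ) :
    pfaRun δ q [c] = δ q c := rfl

theorem pfaRun_append {Q σ : Type*} (δ : Q → σ → Option Q) (q : Q) (u v : List σ) :
    pfaRun δ q (u ++ v) = (pfaRun δ q u).bind fun s => pfaRun δ s v := by
  induction u generalizing q with
  | nil => rfl
  | cons c u ih => simp only [List.cons_append, pfaRun_cons, ih, Option.bind_assoc]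

namespace Pdelta

/-- The action of a letter of `P_n` on states lifted along `ℕ → ℤ/nℤ`: both letters move a
position by at most one step. The undefined transition `1a` is lifted to a step as well, and
excluded separately in `Survives`. -/
def advance (n : ℕ) : Bool → ℕ → ℕ
  | false, p => p + 1
  | true, p => if p % n ≤ 1 then p + 1 else p

/-- The state of `P_n` covered by the lifted position `p`. -/
def stateAt (n : ℕ) (hn : 3 ≤ n) (p : ℕ) : Fin n :=
  ⟨p % n, Nat.mod_lt p (by omega)⟩

/-- The lifted position at time `t`, when starting from `p` and reading `x 0`, `x 1`, …. -/
def position (n : ℕ) (x : ℕ → Bool) (p : ℕ) : ℕ → ℕ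
  | 0 => p
  | t + 1 => advance n (x t) (position n x p t)

/-- The undefined transition `1a` is not taken during the first `T` letters read from `p`. -/
def Survives (n : ℕ) (x : ℕ → Bool) (p T : ℕ) : Prop :=
  ∀ t < T, x t = false → position n x p t % n ≠ 0

section Lift

variable {n : ℕ} {x : ℕ → Bool} {p q s t : ℕ}

theorem stateAt_self_add (hn : 3 ≤ n) (p : ℕ) : stateAt n hn (n + p) = stateAt n hn p :=
  Fin.ext (Nat.add_mod_left n p)

theorem stateAt_succ (hn : 3 ≤ n) (p : ℕ) :
    stateAt n hn (p + 1) = if h : p % n + 1 < n then ⟨p % n + 1, h⟩ else ⟨0, by omega⟩ := by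
  have hp := Nat.mod_lt p (show 0 < n by omega)
  split_ifs with h <;> ext <;>
    simp only [stateAt, Nat.add_mod_eq_ite, Nat.mod_eq_of_lt (show 1 < n by omega)] <;>
    split_ifs <;> omega

theorem apply_stateAt (hn : 3 ≤ n) (p : ℕ) (c : Bool) :
    Pdelta n hn (stateAt n hn p) c =
      if c = false ∧ p % n = 0 then none else some (stateAt n hn (advance n c p)) := by
  have hval : (stateAt n hn p).val = p % n := rfl
  cases c with
  | false =>
    simp only [Pdelta, advance, hval, stateAt_succ hn p, true_and]
    split_ifs <;> rfl
  | true =>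
    simp only [Pdelta, advance, hval, Bool.true_eq_false, false_and, if_false]
    split_ifs with h
    · rw [stateAt_succ hn p, dif_pos]
    · rfl

theorem advance_mono (n : ℕ) (c : Bool) : Monotone (advance n c) := by
  refine monotone_nat_of_le_succ fun p => ?_
  cases c <;> grind [advance]

theorem advance_add_self (n : ℕ) (c : Bool) (p : ℕ) :
    advance n c (p + n) = advance n c p + n := by
  cases c with
  | false => exact Nat.add_right_comm p n 1
  | true => simp only [advance, Nat.add_mod_right]; split_ifs <;> omega

theorem position_add_self (n : ℕ) (x : ℕ → Bool) (p t : ℕ) :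
    position n x (p + n) t = position n x p t + n := by
  induction t with
  | zero => rfl
  | succ t ih => rw [position, ih, advance_add_self, position]

theorem position_le_of_le (h : position n x p s ≤ position n x q s) (hst : s ≤ t) :
    position n x p t ≤ position n x q t := by
  induction t, hst using Nat.le_induction with
  | base => exact h
  | succ t _ ih => exact advance_mono n (x t) ih

theorem position_eq_of_eq (h : position n x p s = position n x q s) (hst : s ≤ t) :
    position n x p t = position n x q t :=
  (position_le_of_le h.le hst).antisymm (position_le_of_le h.ge hst)

theorem pfaRun_range_map (hn : 3 ≤ n) (x : ℕ → Bool) (p T : ℕ) (s : Fin n) :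
    pfaRun (Pdelta n hn) (stateAt n hn p) ((List.range T).map x) = some s ↔
      Survives n x p T ∧ stateAt n hn (position n x p T) = s := by
  induction T generalizing s with
  | zero => simp [pfaRun, Survives, position]
  | succ T ih =>
    have hstep : ((Pdelta n hn (stateAt n hn (position n x p T)) (x T)) = some s) ↔
        (x T = false → position n x p T % n ≠ 0) ∧ stateAt n hn (position n x p (T + 1)) = s := by
      rw [apply_stateAt, position]
      split_ifs with h <;> simp_all
    simp only [List.range_succ, List.map_append, List.map_cons, List.map_nil, pfaRun_append,
      Option.bind_eq_some_iff, ih, and_assoc, exists_and_left, exists_eq_left',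
      pfaRun_singleton, hstep, Survives, Nat.forall_lt_succ_right]

end Lift

section Counts

/-- The number of times before `T` at which `b` moves the position started at `p` away from a
multiple of `n`, that is, from the state `1` of `P_n`. -/
def entryCount (n : ℕ) (x : ℕ → Bool) (p T : ℕ) : ℕ :=
  Nat.count (fun t => x t = true ∧ position n x p t % n = 0) T

/-- The number of times before `T` at which `b` moves the position started at `p` away from the
state `2` of `P_n`. -/
def pushCount (n : ℕ) (x : ℕ → Bool) (p T : ℕ) : ℕ :=
  Nat.count (fun t => x t = true ∧ position n x p t % n = 1) T

variable {n : ℕ} {x : ℕ → Bool} {p t T : ℕ}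

theorem Survives.of_le (h : Survives n x p T) (ht : t ≤ T) : Survives n x p t :=
  fun s hs => h s (hs.trans_le ht)

theorem position_eq_add_counts (n : ℕ) (x : ℕ → Bool) (p T : ℕ) :
    position n x p T =
      p + Nat.count (x · = false) T + entryCount n x p T + pushCount n x p T := by
  induction T with
  | zero => simp [position, entryCount, pushCount]
  | succ T ih =>
    rw [entryCount, pushCount] at ih ⊢
    simp only [position, Nat.count_succ]
    cases hx : x T <;> grind [advance]

theorem entryCount_add_ceilDiv (hn : 0 < n) (h : Survives n x p T) :
    entryCount n x p T + p ⌈/⌉ n = position n x p T ⌈/⌉ n := by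
  induction T with
  | zero => simp [position, entryCount]
  | succ T ih =>
    have ih := ih (h.of_le T.le_succ)
    have hT := h T T.lt_succ_self
    rw [entryCount] at ih ⊢
    rw [position, Nat.count_succ]
    cases hx : x T <;> grind [advance, succ_ceilDiv hn]

theorem pushCount_add_le (hn : 1 < n) (hp : p % n ≠ 1) (h : Survives n x p T) :
    pushCount n x p T + (if position n x p T % n = 1 then 1 else 0) ≤ entryCount n x p T := by
  induction T with
  | zero => simp [position, entryCount, pushCount, hp]
  | succ T ih =>
    have ih := ih (h.of_le T.le_succ)
    have hT := h T T.lt_succ_self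
    rw [entryCount, pushCount] at ih ⊢
    rw [position, Nat.count_succ, Nat.count_succ]
    cases hx : x T <;> grind [advance, succ_mod_eq_one_iff hn]

theorem advance_true_mod_ne_zero (hn : 3 ≤ n) (p : ℕ) : advance n true p % n ≠ 0 := by
  simp only [advance]
  split_ifs with hp
  · rw [Nat.add_mod, Nat.mod_eq_of_lt (show 1 < n by omega), Nat.mod_eq_of_lt] <;> omega
  · omega

theorem position_mod_ne_zero (hn : 3 ≤ n) (hp : p % n ≠ 1) (h : Survives n x p t)
    (hpos : position n x p t % n = 1) (q : ℕ) : position n x q t % n ≠ 0 := by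
  cases t with
  | zero => exact absurd hpos hp
  | succ t =>
    cases hx : x t with
    | false =>
      rw [position, hx, advance, succ_mod_eq_one_iff (by omega)] at hpos
      exact absurd hpos (h t t.lt_succ_self hx)
    | true =>
      rw [position, hx]
      exact advance_true_mod_ne_zero hn _

end Counts

section ActiveTimes

/-- The times before `T` at which reading `b` moves the position started at `p`. -/
def activeTimes (n : ℕ) (x : ℕ → Bool) (T p : ℕ) : Finset ℕ :=
  {t ∈ Finset.range T | x t = true ∧ position n x p t % n ≤ 1}

variable {n : ℕ} {x : ℕ → Bool} {p q t T : ℕ}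

theorem mem_activeTimes :
    t ∈ activeTimes n x T p ↔ t < T ∧ x t = true ∧ position n x p t % n ≤ 1 := by
  rw [activeTimes, Finset.mem_filter, Finset.mem_range]

theorem card_activeTimes (n : ℕ) (x : ℕ → Bool) (T p : ℕ) :
    (activeTimes n x T p).card = entryCount n x p T + pushCount n x p T := by
  rw [activeTimes, ← Nat.count_eq_card_filter_range, entryCount, pushCount]
  induction T with
  | zero => simp
  | succ T ih =>
    simp only [Nat.count_succ, ih]
    grind

-- The residues `0` and `1` cannot occur simultaneously, and a full turn between the two positions
-- would persist until time `T`.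
theorem position_eq_of_active (hn : 3 ≤ n) (hp : p % n ≠ 1) (hq : q % n ≠ 1)
    (hpS : Survives n x p t) (hqS : Survives n x q t)
    (hpt : position n x p t % n ≤ 1) (hqt : position n x q t % n ≤ 1)
    (htT : t ≤ T) (hT : position n x p T = position n x q T) :
    position n x p t = position n x q t := by
  have hp0 := position_mod_ne_zero hn hp hpS
  have hq0 := position_mod_ne_zero hn hq hqS
  have hmod : position n x p t ≡ position n x q t [MOD n] := by
    have := (hp0 · q)
    have := (hq0 · p)
    unfold Nat.ModEq
    omega
  have no_turn {p q : ℕ} (hT : position n x p T = position n x q T) :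
      position n x q t < position n x p t + n := by
    by_contra! h
    rw [← position_add_self] at h
    have := position_le_of_le h htT
    rw [position_add_self] at this
    omega
  exact hmod.eq_of_abs_lt (by rw [abs_lt]; have := no_turn hT; have := no_turn hT.symm; omega)

theorem exists_merge_time (hn : 3 ≤ n) (hp : p % n ≠ 1) (hq : q % n ≠ 1)
    (hpS : Survives n x p T) (hqS : Survives n x q T)
    (hT : position n x p T = position n x q T) :
    ∃ σ ≤ T, position n x p σ = position n x q σ ∧
      activeTimes n x σ p ⊆ activeTimes n x T p \ activeTimes n x T q ∧
      activeTimes n x σ q ⊆ activeTimes n x T q \ activeTimes n x T p := by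
  classical
  have hex : ∃ σ, position n x p σ = position n x q σ := ⟨T, hT⟩
  have hσT := Nat.find_min' hex hT
  have hne (t) (ht : t < Nat.find hex) (hpt : position n x p t % n ≤ 1)
      (hqt : position n x q t % n ≤ 1) : False :=
    Nat.find_min hex ht (position_eq_of_active hn hp hq (hpS.of_le (by omega))
      (hqS.of_le (by omega)) hpt hqt (by omega) hT)
  refine ⟨_, hσT, Nat.find_spec hex, fun t ht => ?_, fun t ht => ?_⟩ <;>
    simp only [Finset.mem_sdiff, mem_activeTimes] at ht ⊢ <;> grind

theorem mul_pushCount_le (hn : 2 ≤ n) (hp : p % n ≠ 1) (h : Survives n x p T) :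
    ((n : ℤ) - 2) * (pushCount n x p T - 1) ≤ Nat.count (x · = false) T := by
  have hpush := pushCount_add_le (by omega) hp h
  have hentry := entryCount_add_ceilDiv (by omega) h
  have hpos := position_eq_add_counts n x p T
  have hstart : p ≤ n * (p ⌈/⌉ n) := (ceilDiv_le_iff_le_mul (by omega)).1 le_rfl
  have hend : n * (position n x p T ⌈/⌉ n) + 1 + (if position n x p T % n = 1 then 0 else 1) ≤
      position n x p T + n := by
    have hlt := mul_ceilDiv_lt (show 0 < n by omega) (position n x p T)
    have hone (h : n * (position n x p T ⌈/⌉ n) + 1 = position n x p T + n) :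
        position n x p T % n = 1 := by
      rw [← Nat.add_mod_right, ← h, Nat.mul_add_mod, Nat.mod_eq_of_lt (by omega)]
    grind
  rw [← hentry] at hend
  split_ifs at hpush hend <;> zify at * <;> nlinarith

end ActiveTimes

section Tokens

/-- The initial position of token `q`. Tokens `0, …, N - 1` start on the states of `P_(N+1)` other
than state `2`, in the cyclic order beginning with state `3`, and token `q + N` one turn after
token `q`. -/
def start (N q : ℕ) : ℕ := q + q / N + 2

/-- The position of token `q` at time `t`. -/
def token (N : ℕ) (x : ℕ → Bool) (q t : ℕ) : ℕ := position (N + 1) x (start N q) t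

/-- No token takes the undefined transition during the first `T` letters. -/
def TokensSurvive (N : ℕ) (x : ℕ → Bool) (T : ℕ) : Prop :=
  ∀ q, Survives (N + 1) x (start N q) T

/-- The times before `T` at which reading `b` moves token `q`. -/
def tokenTimes (N : ℕ) (x : ℕ → Bool) (T q : ℕ) : Finset ℕ :=
  activeTimes (N + 1) x T (start N q)

variable {N : ℕ} {x : ℕ → Bool} {g i j q r t T : ℕ}

theorem TokensSurvive.of_le (hS : TokensSurvive N x T) (ht : t ≤ T) : TokensSurvive N x t :=
  fun q => (hS q).of_le ht

theorem start_eq (N q : ℕ) : start N q = q % N + 2 + (N + 1) * (q / N) := by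
  have := Nat.mod_add_div q N
  rw [start]
  lia

theorem start_mod_ne_one (hN : 0 < N) (q : ℕ) : start N q % (N + 1) ≠ 1 := by
  have hq := Nat.mod_lt q hN
  rw [start_eq, Nat.add_mul_mod_self_left]
  rcases Nat.lt_or_ge (q % N + 2) (N + 1) with h | h
  · rw [Nat.mod_eq_of_lt h]; omega
  · rw [show q % N + 2 = N + 1 by omega, Nat.mod_self]; omega

theorem start_ceilDiv (hN : 0 < N) (q : ℕ) : start N q ⌈/⌉ (N + 1) = q / N + 1 := by
  have hq := Nat.mod_lt q hN
  rw [start_eq, Nat.ceilDiv_eq_add_pred_div,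
    show q % N + 2 + (N + 1) * (q / N) + (N + 1) - 1 = q % N + 1 + (N + 1) * (q / N + 1) by lia,
    Nat.add_mul_div_left _ _ (by omega), Nat.div_eq_of_lt (by omega), Nat.zero_add]

theorem start_mono (N : ℕ) : Monotone (start N) := fun q r h => by
  have := Nat.div_le_div_right (c := N) h
  unfold start
  omega

theorem token_add_self (hN : 0 < N) (x : ℕ → Bool) (q t : ℕ) :
    token N x (q + N) t = token N x q t + (N + 1) := by
  rw [token, token, ← position_add_self, start, start, Nat.add_div_right q hN]
  congr 1
  omega

theorem token_mono (N : ℕ) (x : ℕ → Bool) (t : ℕ) : Monotone (token N x · t) :=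
  fun _ _ h => position_le_of_le (s := 0) (start_mono N h) t.zero_le

theorem token_eq_of_le_of_le (hig : i ≤ g) (hgj : g ≤ j) (h : token N x i t = token N x j t) :
    token N x i t = token N x g t :=
  (token_mono N x t hig).antisymm ((token_mono N x t hgj).trans h.ge)

theorem token_eq_of_active (hN : 2 ≤ N) (hS : TokensSurvive N x T)
    (hT : token N x q T = token N x r T) (hq : t ∈ tokenTimes N x T q)
    (hr : t ∈ tokenTimes N x T r) : token N x q t = token N x r t := by
  rw [tokenTimes, mem_activeTimes] at hq hr
  exact position_eq_of_active (by omega) (start_mod_ne_one (by omega) q)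
    (start_mod_ne_one (by omega) r) ((hS q).of_le hq.1.le) ((hS r).of_le hq.1.le)
    hq.2.2 hr.2.2 hq.1.le hT

theorem mem_tokenTimes_of_token_eq (h : token N x q t = token N x r t)
    (hq : t ∈ tokenTimes N x T q) : t ∈ tokenTimes N x T r := by
  rw [tokenTimes, mem_activeTimes] at hq ⊢
  exact ⟨hq.1, hq.2.1, (congrArg (· % (N + 1)) h).symm.trans_le hq.2.2⟩

theorem exists_token_merge_time (hN : 2 ≤ N) (hS : TokensSurvive N x T)
    (hT : token N x q T = token N x r T) :
    ∃ σ ≤ T, token N x q σ = token N x r σ ∧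
      tokenTimes N x σ q ⊆ tokenTimes N x T q \ tokenTimes N x T r ∧
      tokenTimes N x σ r ⊆ tokenTimes N x T r \ tokenTimes N x T q :=
  exists_merge_time (by omega) (start_mod_ne_one (by omega) q) (start_mod_ne_one (by omega) r)
    (hS q) (hS r) hT

/-- The number of tokens before token `q` that start on a state other than `1`. If two tokens
merge, their distance on this scale bounds from below the number of letters `b` that move the
leader alone. -/
def arcCoord (N q : ℕ) : ℤ := q - (q / N : ℕ)

theorem arcCoord_succ_le (N q : ℕ) : arcCoord N (q + 1) ≤ arcCoord N q + 1 := by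
  have := Nat.div_le_div_right (c := N) (Nat.le_add_right q 1)
  unfold arcCoord
  omega

theorem arcCoord_mono (N : ℕ) : Monotone (arcCoord N) := by
  refine monotone_nat_of_le_succ fun q => ?_
  have : (q + 1) / N = _ := Nat.succ_div
  unfold arcCoord
  split_ifs at this <;> omega

theorem arcCoord_sub_le (h : i ≤ j) : arcCoord N j - arcCoord N i ≤ j - i := by
  have := Nat.div_le_div_right (c := N) h
  unfold arcCoord
  omega

theorem counts_of_token_eq (hN : 2 ≤ N) (hS : TokensSurvive N x T)
    (hT : token N x q T = token N x r T) :
    q + pushCount (N + 1) x (start N q) T = r + pushCount (N + 1) x (start N r) T ∧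
      entryCount (N + 1) x (start N q) T + q / N = entryCount (N + 1) x (start N r) T + r / N := by
  have hentry (q : ℕ) : entryCount (N + 1) x (start N q) T + (q / N + 1) =
      token N x q T ⌈/⌉ (N + 1) :=
    start_ceilDiv (show 0 < N by omega) q ▸ entryCount_add_ceilDiv N.succ_pos (hS q)
  have hpos (q : ℕ) : token N x q T = q + q / N + 2 + Nat.count (x · = false) T +
      entryCount (N + 1) x (start N q) T + pushCount (N + 1) x (start N q) T :=
    position_eq_add_counts ..
  have := hentry q
  have := hentry r
  have := hpos q
  have := hpos r
  grind

theorem two_mul_pushCount_le (hN : 2 ≤ N) (hS : TokensSurvive N x T) (q : ℕ) :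
    2 * pushCount (N + 1) x (start N q) T ≤ (tokenTimes N x T q).card := by
  have := pushCount_add_le (by omega) (start_mod_ne_one (by omega) q) (hS q)
  rw [tokenTimes, card_activeTimes]
  omega

theorem two_mul_sub_le_card_sdiff (hN : 2 ≤ N) (hS : TokensSurvive N x T)
    (hT : token N x i T = token N x j T) :
    2 * ((j : ℤ) - i) ≤ (tokenTimes N x T i \ tokenTimes N x T j).card := by
  obtain ⟨σ, hσT, hσ, hsub, -⟩ := exists_token_merge_time hN hS hT
  have hcard := Finset.card_le_card hsub
  have hpush := two_mul_pushCount_le hN (hS.of_le hσT) i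
  have := (counts_of_token_eq hN (hS.of_le hσT) hσ).1
  omega

theorem arcCoord_sub_le_card_sdiff (hN : 2 ≤ N) (hS : TokensSurvive N x T)
    (hT : token N x i T = token N x j T) :
    arcCoord N j - arcCoord N i ≤ (tokenTimes N x T j \ tokenTimes N x T i).card := by
  obtain ⟨σ, hσT, hσ, -, hsub⟩ := exists_token_merge_time hN hS hT
  have hcard := Finset.card_le_card hsub
  have hpush := pushCount_add_le (by omega) (start_mod_ne_one (by omega) i) (hS.of_le hσT i)
  have := counts_of_token_eq hN (hS.of_le hσT) hσ
  rw [tokenTimes, card_activeTimes] at hcard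
  unfold arcCoord
  omega

/-- The times before `T` at which reading `b` moves some token from `i` to `j`. -/
def windowTimes (N : ℕ) (x : ℕ → Bool) (T i j : ℕ) : Finset ℕ :=
  (Finset.Icc i j).biUnion (tokenTimes N x T)

/-- The times at which reading `b` moves a token from `i` to `j`, but neither token `i` nor
token `j`. -/
def innerTimes (N : ℕ) (x : ℕ → Bool) (T i j : ℕ) : Finset ℕ :=
  windowTimes N x T i j \ (tokenTimes N x T i ∪ tokenTimes N x T j)

theorem mem_windowTimes :
    t ∈ windowTimes N x T i j ↔ ∃ q, i ≤ q ∧ q ≤ j ∧ t ∈ tokenTimes N x T q := by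
  simp only [windowTimes, Finset.mem_biUnion, Finset.mem_Icc, and_assoc]

theorem tokenTimes_subset_windowTimes (hig : i ≤ g) (hgj : g ≤ j) :
    tokenTimes N x T g ⊆ windowTimes N x T i j :=
  fun _ ht => mem_windowTimes.2 ⟨g, hig, hgj, ht⟩

theorem exists_last_gap (hij : i < j) (hT : token N x i T = token N x j T) :
    ∃ g σ, i ≤ g ∧ g < j ∧ token N x i σ = token N x j σ ∧
      ∀ t < σ, token N x g t < token N x (g + 1) t := by
  classical
  have hex : ∃ σ, token N x i σ = token N x j σ := ⟨T, hT⟩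
  rcases hσ : Nat.find hex with _ | τ
  · exact ⟨i, 0, le_rfl, hij, hσ ▸ Nat.find_spec hex, by simp⟩
  obtain ⟨g, hig, hgj, hgap⟩ : ∃ g, i ≤ g ∧ g < j ∧ token N x g τ < token N x (g + 1) τ := by
    by_contra! h
    have hle : ∀ k, i ≤ k → k ≤ j → token N x k τ ≤ token N x i τ :=
      Nat.le_induction (fun _ => le_rfl) fun k hik ih hkj =>
        (h k hik (by omega)).trans (ih (by omega))
    exact Nat.find_min hex (by omega) ((token_mono N x τ hij.le).antisymm (hle j hij.le le_rfl))
  refine ⟨g, τ + 1, hig, hgj, hσ ▸ Nat.find_spec hex, fun t ht => ?_⟩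
  by_contra! h
  exact hgap.not_ge (position_le_of_le h (by omega))

theorem exists_split (hN : 2 ≤ N) (hS : TokensSurvive N x T) (hij : i < j)
    (hT : token N x i T = token N x j T) :
    ∃ g, i ≤ g ∧ g < j ∧
      (windowTimes N x T i g \ tokenTimes N x T i).card +
        (windowTimes N x T (g + 1) j \ tokenTimes N x T j).card ≤
      (innerTimes N x T i j).card := by
  obtain ⟨g, σ, hig, hgj, hσ, hgap⟩ := exists_last_gap hij hT
  have separated {k l t : ℕ} (hik : i ≤ k) (hkg : k ≤ g) (hgl : g + 1 ≤ l) (hlj : l ≤ j)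
      (hk : t ∈ tokenTimes N x T k) (hl : t ∈ tokenTimes N x T l) : σ ≤ t := by
    by_contra! ht
    have hTkl := (token_eq_of_le_of_le hik (by omega) hT).symm.trans
      (token_eq_of_le_of_le (by omega) hlj hT)
    have := token_eq_of_active hN hS hTkl hk hl
    have := hgap t ht
    have := token_mono N x t hkg
    have := token_mono N x t hgl
    grind
  have merged {k l t : ℕ} (hik : i ≤ k) (hkj : k ≤ j) (hil : i ≤ l) (hlj : l ≤ j)
      (ht : σ ≤ t) (hk : t ∈ tokenTimes N x T k) : t ∈ tokenTimes N x T l := by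
    have h := position_eq_of_eq hσ ht
    exact mem_tokenTimes_of_token_eq ((token_eq_of_le_of_le hik hkj h).symm.trans
      (token_eq_of_le_of_le hil hlj h)) hk
  refine ⟨g, hig, hgj, ?_⟩
  rw [← Finset.card_union_of_disjoint]
  · refine Finset.card_le_card fun t ht => ?_
    simp only [innerTimes, Finset.mem_union, Finset.mem_sdiff, mem_windowTimes] at ht ⊢
    rcases ht with ⟨⟨k, hik, hkg, hk⟩, hi⟩ | ⟨⟨k, hgk, hkj, hk⟩, hj⟩
    · refine ⟨⟨k, hik, by omega, hk⟩, not_or.2 ⟨hi, fun hj => hi ?_⟩⟩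
      exact merged hik (by omega) le_rfl hij.le (separated hik hkg hgj le_rfl hk hj) hk
    · refine ⟨⟨k, by omega, hkj, hk⟩, not_or.2 ⟨fun hi => hj ?_, hj⟩⟩
      exact merged (by omega) hkj hij.le le_rfl (separated le_rfl hig hgk hkj hi hk) hk
  · refine Finset.disjoint_left.2 fun t ht ht' => ?_
    simp only [Finset.mem_sdiff, mem_windowTimes] at ht ht'
    obtain ⟨⟨k, hik, hkg, hk⟩, hi⟩ := ht
    obtain ⟨⟨l, hgl, hlj, hl⟩, -⟩ := ht'
    exact hi (merged hik (by omega) le_rfl hij.le (separated hik hkg hgl hlj hk hl) hk)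

theorem mul_arcCoord_sub_le_fib_sub (m : ℕ) (hij : i ≤ j) (h : i = j ∨ m ≤ 3) :
    ((m : ℤ) - 3) * (arcCoord N j - arcCoord N i) ≤ Nat.fib (m + 1) - m := by
  have hfib := Nat.le_fib_add_one (m + 1)
  have hle : ((m : ℤ) - 3) * (arcCoord N j - arcCoord N i) ≤ 0 := by
    rcases h with rfl | hm
    · simp
    · exact mul_nonpos_of_nonpos_of_nonneg (by omega) (sub_nonneg.2 (arcCoord_mono N hij))
  omega

-- Splitting the window at its last gap yields a recursion whose solution is piecewise linear and
-- convex in the width of the window; the bound for `m` is its supporting line of slope `m - 3`.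
theorem mul_arcCoord_sub_le_card_innerTimes (hN : 2 ≤ N) (hS : TokensSurvive N x T) (m : ℕ)
    (hij : i ≤ j) (hT : token N x i T = token N x j T) :
    ((m : ℤ) - 3) * (arcCoord N j - arcCoord N i) ≤
      (innerTimes N x T i j).card + Nat.fib (m + 1) - m := by
  induction m using Nat.twoStepInduction generalizing i j with
  | zero => linarith [mul_arcCoord_sub_le_fib_sub (N := N) 0 hij (by omega)]
  | one => linarith [mul_arcCoord_sub_le_fib_sub (N := N) 1 hij (by omega)]
  | more m ih₀ ih₁ =>
    by_cases h : i = j ∨ m + 2 ≤ 3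
    · linarith [mul_arcCoord_sub_le_fib_sub (N := N) (m + 2) hij h]
    obtain ⟨g, hig, hgj, hsplit⟩ := exists_split hN hS (show i < j by omega) hT
    have hTg := token_eq_of_le_of_le hig hgj.le hT
    have hTg' := (token_eq_of_le_of_le (by omega) hgj hT).symm.trans hT
    have hleft := card_sdiff_eq_card_sdiff_union_add (A := tokenTimes N x T i)
      (tokenTimes_subset_windowTimes (N := N) (x := x) (T := T) hig le_rfl)
    have hright := card_sdiff_eq_card_sdiff_union_add (A := tokenTimes N x T j)
      (tokenTimes_subset_windowTimes (N := N) (x := x) (T := T) le_rfl hgj)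
    rw [Finset.union_comm] at hright
    have hfront := arcCoord_sub_le_card_sdiff hN hS hTg
    have hrear := two_mul_sub_le_card_sdiff hN hS hTg'
    have hih₁ := ih₁ hig hTg
    have hih₀ := ih₀ hgj hTg'
    have harc := arcCoord_sub_le (N := N) hgj
    have hgap := arcCoord_succ_le N g
    have hfib : Nat.fib (m + 3) = Nat.fib (m + 1) + Nat.fib (m + 2) := Nat.fib_add_two
    unfold innerTimes at *
    push_cast [hfib] at *
    have := mul_le_mul_of_nonneg_left hgap (show (0 : ℤ) ≤ m - 1 by omega)
    zify at hsplit hleft hright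
    linarith

theorem le_card_windowTimes (hN : 2 ≤ N) (hS : TokensSurvive N x T) (m : ℕ)
    (hij : i ≤ j) (hT : token N x i T = token N x j T) :
    ((m : ℤ) - 2) * (arcCoord N j - arcCoord N i) + 2 * (j - i) + m - Nat.fib (m + 1) ≤
      (windowTimes N x T i j).card := by
  have hi := tokenTimes_subset_windowTimes (N := N) (x := x) (T := T) le_rfl hij
  have hj := tokenTimes_subset_windowTimes (N := N) (x := x) (T := T) hij le_rfl
  have hinner := mul_arcCoord_sub_le_card_innerTimes hN hS m hij hT
  have hfront := arcCoord_sub_le_card_sdiff hN hS hT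
  have hrear := two_mul_sub_le_card_sdiff hN hS hT
  have hsdiff := card_sdiff_eq_card_sdiff_union_add (A := tokenTimes N x T i) hj
  have hwindow := Finset.card_sdiff_add_card_eq_card hi
  have hle := Finset.card_le_card
    (Finset.sdiff_subset (s := tokenTimes N x T i) (t := tokenTimes N x T j))
  unfold innerTimes at hinner
  zify at *
  linarith

theorem le_of_tokens_merge (hN : 2 ≤ N) (hS : TokensSurvive N x T)
    (hmod : ∀ q r, token N x q T ≡ token N x r T [MOD N + 1]) {m : ℕ} (hm : 2 ≤ m) :
    ((N : ℤ) - 1) * (N - 2) + (m - 2) * (N - 2) + 2 * (N - 1) + m - Nat.fib (m + 1) ≤ T := by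
  obtain ⟨i, hi⟩ := exists_apply_succ_eq_apply_add (by omega) N.succ_pos (token_mono N x T)
    (fun q => token_add_self (by omega) x q T) hmod
  have ha : ((N : ℤ) - 1) * (N - 2) ≤ Nat.count (x · = false) T := by
    have hpush := (counts_of_token_eq hN hS hi).1
    have := mul_pushCount_le (by omega) (start_mod_ne_one (by omega) (i + 1)) (hS (i + 1))
    push_cast at this
    nlinarith
  have hb : (windowTimes N x T (i + 1) (i + N)).card + Nat.count (x · = false) T ≤ T := by
    have hle : (windowTimes N x T (i + 1) (i + N)).card ≤
        (Finset.filter (¬ x · = false) (Finset.range T)).card := by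
      refine Finset.card_le_card fun t ht => ?_
      obtain ⟨q, -, -, hq⟩ := mem_windowTimes.1 ht
      rw [tokenTimes, mem_activeTimes] at hq
      exact Finset.mem_filter.2 ⟨Finset.mem_range.2 hq.1, by simp [hq.2.1]⟩
    have hT := Finset.card_filter_add_card_filter_not (s := Finset.range T) (x · = false)
    rw [Finset.card_range, ← Nat.count_eq_card_filter_range] at hT
    omega
  have hwindow := le_card_windowTimes hN hS m (show i + 1 ≤ i + N by omega) hi
  have harc : (N : ℤ) - 2 ≤ arcCoord N (i + N) - arcCoord N (i + 1) := by
    have := Nat.div_le_div_right (c := N) (Nat.le_add_right i 1)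
    have := Nat.add_div_right i (show 0 < N by omega)
    unfold arcCoord
    omega
  have := mul_le_mul_of_nonneg_left harc (show (0 : ℤ) ≤ m - 2 by omega)
  push_cast at *
  linarith

end Tokens

theorem le_length_of_isCareSyncWord {n : ℕ} (hn : 3 ≤ n) (m : ℕ) {w : List Bool}
    (hw : IsCareSyncWord (Pdelta n hn) w) :
    (n : ℤ) ^ 2 + m * n - 5 * n - Nat.fib (m + 1) - 2 * m + 8 ≤ w.length := by
  obtain ⟨N, rfl⟩ := Nat.exists_eq_succ_of_ne_zero (show n ≠ 0 by omega)
  obtain ⟨s, hs⟩ := hw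
  rw [← map_range_getD w true] at hs
  have hrun (p : ℕ) := (pfaRun_range_map hn _ p _ s).1 (hs (stateAt _ hn p))
  have hmod (q r : ℕ) : token N (w.getD · true) q w.length ≡
      token N (w.getD · true) r w.length [MOD N + 1] :=
    congrArg Fin.val ((hrun (start N q)).2.trans (hrun (start N r)).2.symm)
  have hS : TokensSurvive N (w.getD · true) w.length := fun q => (hrun (start N q)).1
  have bound {m : ℕ} (hm : 2 ≤ m) := le_of_tokens_merge (by omega) hS hmod hm
  rcases Nat.lt_or_ge m 2 with hm | hm
  · have := bound le_rfl
    interval_cases m <;> norm_num at * <;> nlinarith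
  · have := bound hm
    push_cast at *
    linarith

section Schedule

/-- The cell occupied before lap `l` by the token that starts in cell `y`, if `c l z` letters `b`
are spent on cell `z` in lap `l`: two of them push the token into the next cell. -/
def cell (c : ℕ → ℕ → ℕ) (y : ℕ) : ℕ → ℕ
  | 0 => y
  | l + 1 => cell c y l + if 2 ≤ c l (cell c y l) then 1 else 0

/-- The numbers `c l z` of letters `b` spent on cell `z` in lap `l` collect the tokens of the cells
`0, …, L` in cell `L` within `L` laps, without leaving an occupied cell unserved. -/
def IsMergeSchedule (L : ℕ) (c : ℕ → ℕ → ℕ) : Prop :=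
  ∀ y ≤ L, (∀ l < L, 1 ≤ c l (cell c y l)) ∧ cell c y L = L

/-- The number of letters `b` spent by a schedule for the cells `0, …, L` in `L` laps. -/
def scheduleCost (L : ℕ) (c : ℕ → ℕ → ℕ) : ℕ :=
  ∑ l ∈ Finset.range L, ∑ y ∈ Finset.range (L + 1), c l y

variable {c c₁ c₂ : ℕ → ℕ → ℕ} {L k r l y : ℕ}

theorem cell_mono (c : ℕ → ℕ → ℕ) (y : ℕ) : Monotone (cell c y) :=
  monotone_nat_of_le_succ fun _ => Nat.le_add_right _ _

theorem cell_le_add (c : ℕ → ℕ → ℕ) (y l d : ℕ) : cell c y (l + d) ≤ cell c y l + d := by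
  induction d with
  | zero => rfl
  | succ d ih =>
    rw [← Nat.add_assoc, cell]
    split_ifs <;> omega

theorem IsMergeSchedule.cell_le (h : IsMergeSchedule L c) (hy : y ≤ L) (hl : l ≤ L) :
    cell c y l ≤ L :=
  (cell_mono c y hl).trans (h y hy).2.le

theorem IsMergeSchedule.le_cell (h : IsMergeSchedule L c) (hy : y ≤ L) (hl : l ≤ L) :
    l ≤ cell c y l := by
  have := cell_le_add c y l (L - l)
  rw [Nat.add_sub_cancel' hl, (h y hy).2] at this
  omega

/-- Collect the cells `0, …, k` in cell `k` according to `c₁` and, at the same time, the cells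
`k + 1, …, k + r + 1` in the last one according to `c₂`; from lap `k` on push the first group by
one cell per lap. -/
def combineSchedules (k r : ℕ) (c₁ c₂ : ℕ → ℕ → ℕ) (l y : ℕ) : ℕ :=
  (if l < k then if y < k + 1 then c₁ l y else 0 else if y = l then 2 else 0) +
    if k + 1 ≤ y then if l < r then c₂ l (y - (k + 1)) else if y = k + r + 1 then 1 else 0 else 0

theorem cell_combineSchedules_left (h₁ : IsMergeSchedule k c₁) (hy : y ≤ k) (hl : l ≤ k) :
    cell (combineSchedules k r c₁ c₂) y l = cell c₁ y l := by
  induction l with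
  | zero => rfl
  | succ l ih =>
    have := h₁.cell_le hy (l.le_succ.trans hl)
    rw [cell, cell, ih (by omega)]
    grind [combineSchedules]

theorem cell_combineSchedules_left_add (h₁ : IsMergeSchedule k c₁) (hy : y ≤ k) {d : ℕ}
    (hd : d ≤ r + 1) : cell (combineSchedules k r c₁ c₂) y (k + d) = k + d := by
  induction d with
  | zero => exact (cell_combineSchedules_left h₁ hy le_rfl).trans (h₁ y hy).2
  | succ d ih =>
    rw [← Nat.add_assoc, cell, ih (by omega)]
    grind [combineSchedules]

theorem cell_combineSchedules_right (h₂ : IsMergeSchedule r c₂) (hy : y ≤ r) (hl : l ≤ r) :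
    cell (combineSchedules k r c₁ c₂) (k + 1 + y) l = k + 1 + cell c₂ y l := by
  induction l with
  | zero => rfl
  | succ l ih =>
    have := h₂.le_cell hy (l.le_succ.trans hl)
    rw [cell, cell, ih (by omega)]
    grind [combineSchedules]

theorem cell_combineSchedules_right_add (h₂ : IsMergeSchedule r c₂) (hy : y ≤ r) {d : ℕ}
    (hd : d ≤ k + 1) :
    cell (combineSchedules k r c₁ c₂) (k + 1 + y) (r + d) = k + 1 + r := by
  induction d with
  | zero => exact (cell_combineSchedules_right h₂ hy le_rfl).trans (by rw [(h₂ y hy).2])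
  | succ d ih =>
    rw [← Nat.add_assoc, cell, ih (by omega)]
    grind [combineSchedules]

theorem IsMergeSchedule.combine (h₁ : IsMergeSchedule k c₁) (h₂ : IsMergeSchedule r c₂) :
    IsMergeSchedule (k + r + 1) (combineSchedules k r c₁ c₂) := by
  intro y hy
  rcases Nat.lt_or_ge k y with hky | hyk
  · obtain ⟨y, rfl⟩ := Nat.exists_eq_add_of_le (Nat.succ_le_of_lt hky)
    have hyr : y ≤ r := by omega
    refine ⟨fun l hl => ?_, ?_⟩
    · rcases Nat.lt_or_ge l r with hlr | hrl
      · have := h₂.le_cell hyr hlr.le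
        have := (h₂ y hyr).1 l hlr
        rw [Nat.succ_eq_add_one, cell_combineSchedules_right h₂ hyr hlr.le]
        grind [combineSchedules]
      · obtain ⟨d, rfl⟩ := Nat.exists_eq_add_of_le hrl
        rw [Nat.succ_eq_add_one, cell_combineSchedules_right_add h₂ hyr (by omega)]
        grind [combineSchedules]
    · rw [show k + r + 1 = r + (k + 1) by omega]
      exact (cell_combineSchedules_right_add h₂ hyr le_rfl).trans (by omega)
  · refine ⟨fun l hl => ?_, cell_combineSchedules_left_add h₁ hyk le_rfl⟩
    rcases Nat.lt_or_ge l k with hlk | hkl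
    · have := h₁.cell_le hyk hlk.le
      have := (h₁ y hyk).1 l hlk
      rw [cell_combineSchedules_left h₁ hyk hlk.le]
      grind [combineSchedules]
    · obtain ⟨d, rfl⟩ := Nat.exists_eq_add_of_le hkl
      rw [cell_combineSchedules_left_add h₁ hyk (by omega)]
      grind [combineSchedules]

theorem sum_range_add_ite_lt (f : ℕ → ℕ) (a b C : ℕ) :
    ∑ l ∈ Finset.range (a + b), (if l < a then f l else C) =
      ∑ l ∈ Finset.range a, f l + b * C := by
  rw [Finset.sum_range_add]
  exact congrArg₂ _ (Finset.sum_congr rfl fun l hl => if_pos (Finset.mem_range.1 hl)) (by simp)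

theorem scheduleCost_combineSchedules (k r : ℕ) (c₁ c₂ : ℕ → ℕ → ℕ) :
    scheduleCost (k + r + 1) (combineSchedules k r c₁ c₂) =
      scheduleCost k c₁ + scheduleCost r c₂ + (k + 1) + 2 * (r + 1) := by
  have left (l : ℕ) (hl : l < k + r + 1) : ∑ y ∈ Finset.range (k + r + 1 + 1),
      (if l < k then if y < k + 1 then c₁ l y else 0 else if y = l then 2 else 0) =
        if l < k then ∑ y ∈ Finset.range (k + 1), c₁ l y else 2 := by
    split_ifs with h
    · rw [show k + r + 1 + 1 = k + 1 + (r + 1) by omega, sum_range_add_ite_lt, Nat.mul_zero,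
        Nat.add_zero]
    · rw [Finset.sum_ite_eq', if_pos (Finset.mem_range.2 (by omega))]
  have right (l : ℕ) : ∑ y ∈ Finset.range (k + r + 1 + 1),
      (if k + 1 ≤ y then if l < r then c₂ l (y - (k + 1)) else if y = k + r + 1 then 1 else 0
        else 0) = if l < r then ∑ y ∈ Finset.range (r + 1), c₂ l y else 1 := by
    rw [show k + r + 1 + 1 = k + 1 + (r + 1) by omega, Finset.sum_range_add, Finset.sum_eq_zero,
      Nat.zero_add]
    · simp only [Nat.le_add_right, if_true, Nat.add_sub_cancel_left,
        show ∀ y, k + 1 + y = k + r + 1 ↔ y = r by omega]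
      split_ifs
      · rfl
      · rw [Finset.sum_ite_eq', if_pos (Finset.mem_range.2 r.lt_succ_self)]
    · exact fun y hy => if_neg (Finset.mem_range.1 hy).not_ge
  have hleft := sum_range_add_ite_lt (fun l => ∑ y ∈ Finset.range (k + 1), c₁ l y) k (r + 1) 2
  have hright := sum_range_add_ite_lt (fun l => ∑ y ∈ Finset.range (r + 1), c₂ l y) r (k + 1) 1
  rw [← Nat.add_assoc, ← Finset.sum_congr rfl fun l hl => left l (Finset.mem_range.1 hl)] at hleft
  rw [← Finset.sum_congr rfl fun l _ => right l, show r + (k + 1) = k + r + 1 by omega] at hright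
  simp only [scheduleCost, combineSchedules, Finset.sum_add_distrib]
  omega

theorem exists_isMergeSchedule (m L : ℕ) (hlo : Nat.fib m ≤ L + 1)
    (hhi : L + 1 ≤ Nat.fib (m + 1)) :
    ∃ c, IsMergeSchedule L c ∧ scheduleCost L c + Nat.fib (m + 2) = (m + 1) * (L + 1) := by
  have single : IsMergeSchedule 0 0 := fun y hy => ⟨by simp, by simpa [cell] using hy⟩
  induction m using Nat.twoStepInduction generalizing L with
  | zero =>
    obtain rfl : L = 0 := by simpa using hhi
    exact ⟨0, single, rfl⟩
  | one =>
    obtain rfl : L = 0 := by simpa using hhi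
    exact ⟨0, single, rfl⟩
  | more m ih₀ ih₁ =>
    have hfib₂ : Nat.fib (m + 2) = Nat.fib m + Nat.fib (m + 1) := Nat.fib_add_two
    have hfib₃ : Nat.fib (m + 2 + 1) = Nat.fib (m + 1) + Nat.fib (m + 2) := Nat.fib_add_two
    have hfib₄ : Nat.fib (m + 2 + 2) = Nat.fib (m + 2) + Nat.fib (m + 2 + 1) := Nat.fib_add_two
    have hpos : 0 < Nat.fib (m + 1) := Nat.fib_pos.2 m.succ_pos
    have hmono : Nat.fib m ≤ Nat.fib (m + 1) := Nat.fib_le_fib_succ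
    rcases Nat.eq_zero_or_pos L with rfl | hL
    · obtain rfl : m = 0 := by
        by_contra hm
        have := Nat.fib_pos.2 (Nat.pos_of_ne_zero hm)
        omega
      exact ⟨0, single, rfl⟩
    have hzero : Nat.fib m = 0 → Nat.fib (m + 1) = 1 := fun h => by rw [Nat.fib_eq_zero.1 h]; rfl
    obtain ⟨k, r, rfl, hk₁, hk₂, hr₁, hr₂⟩ : ∃ k r, L = k + r + 1 ∧ Nat.fib (m + 1) ≤ k + 1 ∧
        k + 1 ≤ Nat.fib (m + 2) ∧ Nat.fib m ≤ r + 1 ∧ r + 1 ≤ Nat.fib (m + 1) := by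
      refine ⟨max (Nat.fib (m + 1)) (L + 1 - Nat.fib (m + 1)) - 1,
        L - max (Nat.fib (m + 1)) (L + 1 - Nat.fib (m + 1)), ?_⟩
      omega
    obtain ⟨c₁, hc₁, hcost₁⟩ := ih₁ k hk₁ hk₂
    obtain ⟨c₂, hc₂, hcost₂⟩ := ih₀ r hr₁ hr₂
    refine ⟨_, hc₁.combine hc₂, ?_⟩
    rw [scheduleCost_combineSchedules]
    linarith

end Schedule

section Word

/-- The word `a b^(k (y - 1)) a b^(k (y - 2)) ⋯ a b^(k 0) a`. For `y = n - 2` it takes a token from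
state `z + 3` of `P_n` through state `1`, where it spends `k z` letters `b` on it. -/
def sweep (k : ℕ → ℕ) : ℕ → List Bool
  | 0 => [false]
  | y + 1 => false :: (List.replicate (k y) true ++ sweep k y)

theorem length_sweep (k : ℕ → ℕ) (y : ℕ) :
    (sweep k y).length = y + 1 + ∑ z ∈ Finset.range y, k z := by
  induction y with
  | zero => rfl
  | succ y ih =>
    rw [sweep, List.length_cons, List.length_append, List.length_replicate, ih,
      Finset.sum_range_succ]
    omega

variable {n : ℕ} {k : ℕ → ℕ} {p y z : ℕ}

theorem apply_false (hn : 3 ≤ n) (hp : p % n ≠ 0) :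
    Pdelta n hn (stateAt n hn p) false = some (stateAt n hn (p + 1)) := by
  rw [apply_stateAt, if_neg (by simp [hp]), advance]

theorem pfaRun_replicate_of_two_le (hn : 3 ≤ n) (hp : 2 ≤ p) (hpn : p < n) (e : ℕ) :
    pfaRun (Pdelta n hn) (stateAt n hn p) (List.replicate e true) = some (stateAt n hn p) := by
  induction e with
  | zero => rfl
  | succ e ih =>
    rw [List.replicate_succ, pfaRun_cons, apply_stateAt, if_neg (by simp), advance,
      Nat.mod_eq_of_lt hpn, if_neg (by omega)]
    exact ih

theorem pfaRun_replicate_zero (hn : 3 ≤ n) (e : ℕ) :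
    pfaRun (Pdelta n hn) (stateAt n hn 0) (List.replicate e true) =
      some (stateAt n hn (min e 2)) := by
  have hone : 1 % n = 1 := Nat.mod_eq_of_lt (by omega)
  match e with
  | 0 => rfl
  | 1 => simp [pfaRun_singleton, apply_stateAt, advance]
  | e + 2 =>
    have h := pfaRun_replicate_of_two_le hn le_rfl (by omega) e
    simp [List.replicate_succ, pfaRun_cons, apply_stateAt, advance, hone, h]

theorem pfaRun_sweep_of_pos (hn : 3 ≤ n) (hp : 1 ≤ p) (hpy : p + y < n) :
    pfaRun (Pdelta n hn) (stateAt n hn p) (sweep k y) = some (stateAt n hn (p + y + 1)) := by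
  induction y generalizing p with
  | zero =>
    rw [sweep, pfaRun_singleton, apply_false hn (by rw [Nat.mod_eq_of_lt] <;> omega), Nat.add_zero]
  | succ y ih =>
    rw [sweep, pfaRun_cons, apply_false hn (by rw [Nat.mod_eq_of_lt] <;> omega), Option.bind_some,
      pfaRun_append, pfaRun_replicate_of_two_le hn (by omega) (by omega), Option.bind_some,
      ih (by omega) (by omega)]
    congr 2
    omega

theorem pfaRun_sweep_of_lt (hn : 3 ≤ n) (hp : 1 ≤ p) (hzy : z < y) (hpy : p + y = n + z)
    (hz : z + 3 ≤ n) (hk : 1 ≤ k z) :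
    pfaRun (Pdelta n hn) (stateAt n hn p) (sweep k y) =
      some (stateAt n hn (min (k z) 2 + z + 1)) := by
  induction y generalizing p with
  | zero => exact absurd hzy z.not_lt_zero
  | succ y ih =>
    rw [sweep, pfaRun_cons, apply_false hn (by rw [Nat.mod_eq_of_lt] <;> omega), Option.bind_some,
      pfaRun_append]
    rcases Nat.lt_succ_iff_lt_or_eq.1 hzy with hzy | rfl
    · rw [pfaRun_replicate_of_two_le hn (by omega) (by omega), Option.bind_some,
        ih (by omega) hzy (by omega)]
    · rw [show p + 1 = n + 0 by omega, stateAt_self_add, pfaRun_replicate_zero, Option.bind_some,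
        pfaRun_sweep_of_pos hn (by omega) (by omega)]

theorem pfaRun_lap {L : ℕ} (hn : 3 ≤ L + 3) (hy : y ≤ L) (hk : 1 ≤ k y) :
    pfaRun (Pdelta (L + 3) hn) (stateAt _ hn (y + 2)) (sweep k (L + 1)) =
      some (stateAt _ hn (y + (if 2 ≤ k y then 1 else 0) + 2)) := by
  rw [pfaRun_sweep_of_lt hn (by omega) (Nat.lt_succ_of_le hy) (by omega) (by omega) hk]
  congr 2
  split_ifs <;> omega

/-- The first `T` laps of the word that executes the schedule `c` on the cells `0, …, L`. -/
def laps (L : ℕ) (c : ℕ → ℕ → ℕ) (T : ℕ) : List Bool :=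
  (List.range T).flatMap fun l => sweep (c l) (L + 1)

variable {L T : ℕ} {c : ℕ → ℕ → ℕ}

theorem length_laps (L : ℕ) (c : ℕ → ℕ → ℕ) (T : ℕ) :
    (laps L c T).length =
      T * (L + 2) + ∑ l ∈ Finset.range T, ∑ y ∈ Finset.range (L + 1), c l y := by
  induction T with
  | zero => simp [laps]
  | succ T ih =>
    rw [laps] at ih ⊢
    rw [List.range_succ, List.flatMap_append, List.length_append, ih, List.flatMap_singleton,
      length_sweep, Finset.sum_range_succ (fun l => ∑ y ∈ Finset.range (L + 1), c l y)]
    ring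

theorem pfaRun_laps (hn : 3 ≤ L + 3) (h : IsMergeSchedule L c) (hy : y ≤ L) (hT : T ≤ L) :
    pfaRun (Pdelta (L + 3) hn) (stateAt _ hn (y + 2)) (laps L c T) =
      some (stateAt _ hn (cell c y T + 2)) := by
  induction T with
  | zero => rfl
  | succ T ih =>
    rw [laps] at ih ⊢
    rw [List.range_succ, List.flatMap_append, pfaRun_append, ih (by omega), Option.bind_some,
      List.flatMap_singleton, pfaRun_lap hn (h.cell_le hy (by omega)) ((h y hy).1 T hT), cell]

theorem exists_pfaRun_true_true {L : ℕ} (hn : 3 ≤ L + 3) (q : Fin (L + 3)) :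
    ∃ y ≤ L, pfaRun (Pdelta (L + 3) hn) q [true, true] = some (stateAt _ hn (y + 2)) := by
  obtain ⟨q, hq⟩ := q
  rw [show (⟨q, hq⟩ : Fin (L + 3)) = stateAt _ hn q from Fin.ext (Nat.mod_eq_of_lt hq).symm]
  match q with
  | 0 => exact ⟨0, L.zero_le, pfaRun_replicate_zero hn 2⟩
  | 1 =>
    refine ⟨0, L.zero_le, ?_⟩
    rw [pfaRun_cons, apply_stateAt, if_neg (by simp), advance, Nat.mod_eq_of_lt hq, if_pos le_rfl,
      Option.bind_some]
    exact pfaRun_replicate_of_two_le hn le_rfl (by omega) 1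
  | y + 2 => exact ⟨y, by omega, pfaRun_replicate_of_two_le hn (by omega) hq 2⟩

-- Before the last lap all tokens are in the top two cells, so that `abab²` replaces a full sweep.
theorem pfaRun_last_lap (hn : 3 ≤ n) (hp : n ≤ p + 2) (hpn : p < n) :
    pfaRun (Pdelta n hn) (stateAt n hn p) [false, true, false, true, true] =
      some (stateAt n hn 2) := by
  rw [show [false, true, false, true, true] =
      false :: (List.replicate 1 true ++ false :: List.replicate 2 true) from rfl,
    pfaRun_cons, apply_false hn (by rw [Nat.mod_eq_of_lt] <;> omega), Option.bind_some,
    pfaRun_append]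
  rcases Nat.lt_or_ge (p + 1) n with hlt | hge
  · rw [pfaRun_replicate_of_two_le hn (by omega) hlt, Option.bind_some, pfaRun_cons,
      apply_false hn (by rw [Nat.mod_eq_of_lt] <;> omega), Option.bind_some,
      show p + 1 + 1 = n + 0 by omega, stateAt_self_add, pfaRun_replicate_zero]
    rfl
  · rw [show p + 1 = n + 0 by omega, stateAt_self_add, pfaRun_replicate_zero, Option.bind_some,
      pfaRun_cons, apply_false hn (by rw [Nat.mod_eq_of_lt] <;> omega), Option.bind_some]
    exact pfaRun_replicate_of_two_le hn le_rfl (by omega) 2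

theorem IsMergeSchedule.three_le_last_lap (h : IsMergeSchedule (L + 1) c) :
    3 ≤ ∑ y ∈ Finset.range (L + 2), c L y := by
  have hzero : cell c 0 L = L := by
    have hle : cell c 0 L ≤ L := by simpa [cell] using cell_le_add c 0 0 L
    exact hle.antisymm (h.le_cell (Nat.zero_le _) L.le_succ)
  have hlast : cell c (L + 1) L = L + 1 :=
    (h.cell_le le_rfl L.le_succ).antisymm (cell_mono c (L + 1) L.zero_le)
  have hpush : 2 ≤ c L L := by
    have := (h 0 (Nat.zero_le _)).2
    rw [cell, hzero] at this
    by_contra hlt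
    rw [if_neg hlt] at this
    omega
  have hserve := (h (L + 1) le_rfl).1 L L.lt_succ_self
  rw [hlast] at hserve
  rw [Finset.sum_range_succ, Finset.sum_range_succ]
  omega

theorem IsMergeSchedule.exists_isCareSyncWord (hn : 3 ≤ L + 3) (h : IsMergeSchedule L c) :
    ∃ w, IsCareSyncWord (Pdelta (L + 3) hn) w ∧
      w.length ≤ L * (L + 1) + 2 + scheduleCost L c := by
  cases L with
  | zero =>
    refine ⟨[true, true], ⟨stateAt 3 hn 2, fun q => ?_⟩, by simp⟩
    obtain ⟨y, hy, hq⟩ := exists_pfaRun_true_true hn q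
    rw [hq, Nat.le_zero.1 hy]
  | succ L =>
    refine ⟨[true, true] ++ laps (L + 1) c L ++ [false, true, false, true, true],
      ⟨stateAt _ hn 2, fun q => ?_⟩, ?_⟩
    · obtain ⟨y, hy, hq⟩ := exists_pfaRun_true_true hn q
      have hlower := h.le_cell hy L.le_succ
      have hupper := h.cell_le hy L.le_succ
      rw [pfaRun_append, pfaRun_append, hq, Option.bind_some, pfaRun_laps hn h hy L.le_succ,
        Option.bind_some, pfaRun_last_lap hn (by omega) (by omega)]
    · have hlast := h.three_le_last_lap
      simp only [List.length_append, length_laps, List.length_cons, List.length_nil]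
      rw [scheduleCost, Finset.sum_range_succ]
      linarith

end Word

end Pdelta

/-- For `n ≥ 3`, with `m` the unique integer such that `fib(m−1) < n−2 ≤ fib(m)`,
every shortest carefully synchronizing word `w` of `P_n` has length
`n² + mn − 5n − fib(m+1) − 2m + 8`; moreover this length exceeds `(n−1)²` for `n ≥ 6`. -/
theorem Pn_shortest_sync (n m : ℕ) (hn : 3 ≤ n)
    (hm1 : Nat.fib (m - 1) < n - 2) (hm2 : n - 2 ≤ Nat.fib m)
    (w : List Bool) (hw : IsCareSyncWord (Pdelta n hn) w)
    (hmin : ∀ v : List Bool, IsCareSyncWord (Pdelta n hn) v → w.length ≤ v.length) :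
    (w.length : ℤ) =
        (n : ℤ) ^ 2 + m * n - 5 * n - Nat.fib (m + 1) - 2 * m + 8 ∧
      (6 ≤ n → (n - 1) ^ 2 < w.length) := by
  have hlength : (w.length : ℤ) =
      (n : ℤ) ^ 2 + m * n - 5 * n - Nat.fib (m + 1) - 2 * m + 8 := by
    refine le_antisymm ?_ (Pdelta.le_length_of_isCareSyncWord hn m hw)
    obtain ⟨L, rfl⟩ := Nat.exists_eq_add_of_le' hn
    obtain ⟨k, rfl⟩ : ∃ k, m = k + 1 := Nat.exists_eq_succ_of_ne_zero <| by
      rintro rfl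
      simp at hm2
    obtain ⟨c, hc, hcost⟩ := Pdelta.exists_isMergeSchedule k L hm1.le hm2
    obtain ⟨v, hv, hlen⟩ := hc.exists_isCareSyncWord hn
    have hupper := (hmin v hv).trans hlen
    zify at hupper hcost ⊢
    linarith
  refine ⟨hlength, fun hn6 => ?_⟩
  have hm5 := five_le_of_four_le_fib (show 4 ≤ Nat.fib m by omega)
  have hfib := fib_succ_le_mul hm5 hm1
  zify [show 2 ≤ n by omega, show 3 ≤ m by omega] at hfib
  zify [show 1 ≤ n by omega]
  rw [hlength]
  nlinarith
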